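/- Let W : H_{Q0} → H_Q⊗H_E be an isometry (all spaces finite-dimensional) and let 𝒲 : L(H_{Q0}) → L(H_Q) be the induced channel 𝒲(σ) = Tr_E[W σ W†]. Suppose 𝒲 is invertible on its range by a channel, i.e., there exists a CPTP map 𝒲' : L(H_Q) → L(H_{Q0}) with 𝒲'∘𝒲 = id_{L(H_{Q0})}. Then for every finite-dimensional H_R and every state ω_{RQ0} on H_R⊗H_{Q0}, the state ρ_RQE := (1_R⊗W) ω_{RQ0} (1_R⊗W)† on H_R⊗H_Q⊗H_E satisfies I(R;E|Q)_ρ = 0. -/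

import Mathlib

open Matrix Kronecker ComplexOrder

noncomputable section

/-- Von Neumann entropy `S(ρ) = -Tr[ρ log ρ]`, computed from the eigenvalues
(junk value `0` if `ρ` is not Hermitian). -/
def vnEntropy {n : Type*} [Fintype n] [DecidableEq n] (ρ : Matrix n n ℂ) : ℝ :=
  if h : ρ.IsHermitian then ∑ i, Real.negMulLog (h.eigenvalues i) else 0

/-- Partial trace over the first tensor factor. -/
def ptraceLeft {A B : Type*} [Fintype A] (M : Matrix (A × B) (A × B) ℂ) : Matrix B B ℂ :=
  Matrix.of fun x y => ∑ a, M (a, x) (a, y)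

/-- Partial trace over the second tensor factor. -/
def ptraceRight {A B : Type*} [Fintype B] (M : Matrix (A × B) (A × B) ℂ) : Matrix A A ℂ :=
  Matrix.of fun x y => ∑ b, M (x, b) (y, b)

/-- Partial trace over the last factor of a tripartite operator on `R ⊗ Q ⊗ E`. -/
def ptrace3E {R Q E : Type*} [Fintype E] (M : Matrix (R × Q × E) (R × Q × E) ℂ) :
    Matrix (R × Q) (R × Q) ℂ :=
  Matrix.of fun x y => ∑ e, M (x.1, x.2, e) (y.1, y.2, e)

/-- A state is a positive semidefinite operator with unit trace. -/
def IsState {n : Type*} [Fintype n] (ρ : Matrix n n ℂ) : Prop :=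
  ρ.PosSemidef ∧ ρ.trace = 1

/-- Quantum mutual information `I(A;B) = S(ρ_A) + S(ρ_B) - S(ρ_AB)`. -/
def mutualInfo {A B : Type*} [Fintype A] [DecidableEq A] [Fintype B] [DecidableEq B]
    (ρ : Matrix (A × B) (A × B) ℂ) : ℝ :=
  vnEntropy (ptraceRight ρ) + vnEntropy (ptraceLeft ρ) - vnEntropy ρ

/-- Conditional quantum mutual information
`I(R;E|Q) = S(ρ_RQ) + S(ρ_QE) - S(ρ_RQE) - S(ρ_Q)`. -/
def condMutualInfo {R Q E : Type*} [Fintype R] [DecidableEq R] [Fintype Q] [DecidableEq Q]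
    [Fintype E] [DecidableEq E] (ρ : Matrix (R × Q × E) (R × Q × E) ℂ) : ℝ :=
  vnEntropy (ptrace3E ρ) + vnEntropy (ptraceLeft ρ) - vnEntropy ρ
    - vnEntropy (ptraceLeft (ptrace3E ρ))

/-- The map `id_n ⊗ Φ` obtained by applying `Φ` blockwise. -/
def idTensor {A B : Type*} (n : Type*) (Φ : Matrix A A ℂ →ₗ[ℂ] Matrix B B ℂ)
    (M : Matrix (n × A) (n × A) ℂ) : Matrix (n × B) (n × B) ℂ :=
  Matrix.of fun x y => Φ (Matrix.of fun a b => M (x.1, a) (y.1, b)) x.2 y.2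

/-- Complete positivity: for every `k`, `id_{Fin k} ⊗ Φ` preserves positive semidefiniteness. -/
def IsCPMap {A B : Type*} [Fintype A] [Fintype B]
    (Φ : Matrix A A ℂ →ₗ[ℂ] Matrix B B ℂ) : Prop :=
  ∀ (k : ℕ) (M : Matrix (Fin k × A) (Fin k × A) ℂ), M.PosSemidef →
    (idTensor (Fin k) Φ M).PosSemidef

/-- A CPTP map (quantum channel). -/
def IsCPTP {A B : Type*} [Fintype A] [Fintype B]
    (Φ : Matrix A A ℂ →ₗ[ℂ] Matrix B B ℂ) : Prop :=
  IsCPMap Φ ∧ ∀ M : Matrix A A ℂ, (Φ M).trace = M.trace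

/-- The family of states on `Q ⊗ E` steered from `R` by measurements on a tripartite state. -/
def steered {R Q E : Type*} [Fintype R] [Fintype Q] [DecidableEq Q] [Fintype E] [DecidableEq E]
    (ρ : Matrix (R × Q × E) (R × Q × E) ℂ) : Set (Matrix (Q × E) (Q × E) ℂ) :=
  { ω | ∃ P : Matrix R R ℂ, P.PosSemidef ∧
      (ptraceLeft ((P ⊗ₖ (1 : Matrix (Q × E) (Q × E) ℂ)) * ρ)).trace ≠ 0 ∧
      ω = ((ptraceLeft ((P ⊗ₖ (1 : Matrix (Q × E) (Q × E) ℂ)) * ρ)).trace)⁻¹ •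
            ptraceLeft ((P ⊗ₖ (1 : Matrix (Q × E) (Q × E) ℂ)) * ρ) }

/-- A post-selected family of bipartite system-environment states: the normalized
output state space of some completely positive map `𝒫 : Q₀E₀ → QE`. -/
def IsPostSelected {Q E : Type*} [Fintype Q] [Fintype E]
    (S : Set (Matrix (Q × E) (Q × E) ℂ)) : Prop :=
  ∃ (n0 m0 : ℕ)
    (P : Matrix (Fin n0 × Fin m0) (Fin n0 × Fin m0) ℂ →ₗ[ℂ] Matrix (Q × E) (Q × E) ℂ),
    IsCPMap P ∧
    S = { ω | ∃ ρ0, IsState ρ0 ∧ (P ρ0).trace ≠ 0 ∧ ω = ((P ρ0).trace)⁻¹ • P ρ0 }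

/-!
The channel `σ ↦ Tr_E[W σ W†]` has Kraus operators `W_e = ⟨e| W`. Composing them with Kraus
operators `K_s` of the inverse channel gives a Kraus representation `K_s W_e` of the identity,
whose members commute with every matrix and hence are scalars. Since `∑ s, K_s† K_s = 1`, this
yields the Knill–Laflamme relations `W_e† W_f = C_{ef} • 1`, where `C` is positive of unit trace.

Gluing the `W_e` into the row `V = (W_e)_e` turns the relations into `V† V = 1 ⊗ C` and the channel
into `σ ↦ V (σ ⊗ 1) V†`, so the output on `Q` has the same nonzero spectrum as `σ ⊗ C`. The
relations survive tensoring with the reference `R`, so `S(ρ_RQ) = S(ω) + S(C)` and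
`S(ρ_Q) = S(ω_{Q₀}) + S(C)`, while `S(ρ_RQE) = S(ω)` and `S(ρ_QE) = S(ω_{Q₀})` because `W` is
isometric. The four entropies cancel.
-/

section MatrixAlgebra

variable {k l m n : Type*}

lemma isHermitian_diagonal_ofReal [DecidableEq n] (d : n → ℝ) :
    (diagonal fun i => (d i : ℂ)).IsHermitian :=
  isHermitian_diagonal_of_self_adjoint _ <| funext fun i => Complex.conj_ofReal (d i)

lemma isHermitian_kronecker {A : Matrix m m ℂ} {B : Matrix n n ℂ} (hA : A.IsHermitian)
    (hB : B.IsHermitian) : (A ⊗ₖ B).IsHermitian := by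
  rw [IsHermitian, conjTranspose_kronecker, hA.eq, hB.eq]

lemma kronecker_isometry [Fintype k] [Fintype l] [DecidableEq m] [DecidableEq n]
    {U : Matrix k m ℂ} {V : Matrix l n ℂ} (hU : Uᴴ * U = 1) (hV : Vᴴ * V = 1) :
    (U ⊗ₖ V)ᴴ * (U ⊗ₖ V) = 1 := by
  rw [conjTranspose_kronecker, ← mul_kronecker_mul, hU, hV, one_kronecker_one]

lemma sum_eigenvalues_eq_re_trace [Fintype n] [DecidableEq n] {A : Matrix n n ℂ}
    (hA : A.IsHermitian) : ∑ i, hA.eigenvalues i = A.trace.re := by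
  rw [hA.trace_eq_sum_eigenvalues]
  simp

lemma exists_isometry_conj_diagonal_eigenvalues [Fintype n] [DecidableEq n] {A : Matrix n n ℂ}
    (hA : A.IsHermitian) :
    ∃ U : Matrix n n ℂ, Uᴴ * U = 1 ∧
      A = U * diagonal (fun i => (hA.eigenvalues i : ℂ)) * Uᴴ :=
  ⟨hA.eigenvectorUnitary, Unitary.coe_star_mul_self hA.eigenvectorUnitary, hA.spectral_theorem⟩

end MatrixAlgebra

section Entropy

open Polynomial

variable {m n : Type*} [Fintype m] [DecidableEq m] [Fintype n] [DecidableEq n]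

lemma vnEntropy_of_isEmpty [IsEmpty n] (A : Matrix n n ℂ) : vnEntropy A = 0 := by
  simp [vnEntropy]

lemma vnEntropy_eq_sum_roots_charpoly {A : Matrix n n ℂ} (hA : A.IsHermitian) :
    vnEntropy A = (A.charpoly.roots.map fun z => Real.negMulLog z.re).sum := by
  rw [vnEntropy, dif_pos hA, hA.roots_charpoly_eq_eigenvalues, Multiset.map_map]
  simp

lemma vnEntropy_mul_comm {A : Matrix m n ℂ} {B : Matrix n m ℂ}
    (hAB : (A * B).IsHermitian) (hBA : (B * A).IsHermitian) :
    vnEntropy (A * B) = vnEntropy (B * A) := by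
  -- The two spectra differ only by zeros, which `negMulLog` annihilates.
  have h_roots := congrArg (fun p : ℂ[X] => (p.roots.map fun z => Real.negMulLog z.re).sum)
    (charpoly_mul_comm' A B)
  rw [roots_mul (mul_ne_zero (pow_ne_zero _ X_ne_zero) (charpoly_monic _).ne_zero),
    roots_mul (mul_ne_zero (pow_ne_zero _ X_ne_zero) (charpoly_monic _).ne_zero)] at h_roots
  simpa [Multiset.map_nsmul, Multiset.sum_nsmul, vnEntropy_eq_sum_roots_charpoly hAB,
    vnEntropy_eq_sum_roots_charpoly hBA] using h_roots

lemma vnEntropy_isometry_conj {V : Matrix m n ℂ} (hV : Vᴴ * V = 1) {A : Matrix n n ℂ}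
    (hA : A.IsHermitian) : vnEntropy (V * A * Vᴴ) = vnEntropy A := by
  have h_cancel : Vᴴ * (V * A) = A := by rw [← Matrix.mul_assoc, hV, Matrix.one_mul]
  rw [vnEntropy_mul_comm (isHermitian_mul_mul_conjTranspose _ hA) (by rwa [h_cancel]), h_cancel]

lemma vnEntropy_diagonal (d : n → ℝ) :
    vnEntropy (diagonal fun i => (d i : ℂ)) = ∑ i, Real.negMulLog (d i) := by
  rw [vnEntropy_eq_sum_roots_charpoly (isHermitian_diagonal_ofReal d), charpoly_diagonal,
    roots_prod _ _ (Finset.prod_ne_zero_iff.mpr fun i _ => X_sub_C_ne_zero _)]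
  simp

lemma vnEntropy_kronecker_eq_sum {A : Matrix m m ℂ} {B : Matrix n n ℂ} (hA : A.IsHermitian)
    (hB : B.IsHermitian) :
    vnEntropy (A ⊗ₖ B) =
      ∑ i, ∑ j, Real.negMulLog (hA.eigenvalues i * hB.eigenvalues j) := by
  obtain ⟨U, hU, hUA⟩ := exists_isometry_conj_diagonal_eigenvalues hA
  obtain ⟨V, hV, hVB⟩ := exists_isometry_conj_diagonal_eigenvalues hB
  have h_diag : A ⊗ₖ B = (U ⊗ₖ V) *
      diagonal (fun i : m × n => ((hA.eigenvalues i.1 * hB.eigenvalues i.2 : ℝ) : ℂ)) *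
      (U ⊗ₖ V)ᴴ := by
    conv_lhs => rw [hUA, hVB]
    rw [mul_kronecker_mul, mul_kronecker_mul, diagonal_kronecker_diagonal, conjTranspose_kronecker]
    push_cast
    rfl
  rw [h_diag, vnEntropy_isometry_conj (kronecker_isometry hU hV) (isHermitian_diagonal_ofReal _),
    vnEntropy_diagonal, Fintype.sum_prod_type]

lemma vnEntropy_kronecker {A : Matrix m m ℂ} {B : Matrix n n ℂ} (hA : A.IsHermitian)
    (hB : B.IsHermitian) :
    vnEntropy (A ⊗ₖ B) = B.trace.re * vnEntropy A + A.trace.re * vnEntropy B := by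
  rw [vnEntropy_kronecker_eq_sum hA hB, vnEntropy, dif_pos hA, vnEntropy, dif_pos hB,
    ← sum_eigenvalues_eq_re_trace hA, ← sum_eigenvalues_eq_re_trace hB]
  simp only [Real.negMulLog_mul, Finset.sum_add_distrib, ← Finset.mul_sum, ← Finset.sum_mul]

end Entropy

section Kraus

variable {A B ι : Type*} [Fintype A] [Fintype ι]

/-- The completely positive map with Kraus operators `K`. -/
def krausMap (K : ι → Matrix B A ℂ) (X : Matrix A A ℂ) : Matrix B B ℂ :=
  ∑ s, K s * X * (K s)ᴴ

lemma krausMap_krausMap {C κ : Type*} [Fintype B] [Fintype κ] (L : κ → Matrix C B ℂ)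
    (K : ι → Matrix B A ℂ) (X : Matrix A A ℂ) :
    krausMap L (krausMap K X) = krausMap (fun p : κ × ι => L p.1 * K p.2) X := by
  simp [krausMap, Fintype.sum_prod_type, Matrix.mul_sum, Matrix.sum_mul, Matrix.mul_assoc]

lemma sum_conjTranspose_mul_self_eq_one_of_trace_krausMap [DecidableEq A] [Fintype B]
    {K : ι → Matrix B A ℂ} (h : ∀ X, (krausMap K X).trace = X.trace) :
    ∑ s, (K s)ᴴ * K s = 1 := by
  refine ext_iff_trace_mul_right.mpr fun X => ?_
  rw [Matrix.one_mul, ← h X, krausMap, Finset.sum_mul, trace_sum, trace_sum]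
  refine Finset.sum_congr rfl fun s _ => ?_
  rw [Matrix.mul_assoc, trace_mul_comm]

open scoped MatrixOrder in
lemma commute_of_krausMap_eq_self {N : ι → Matrix A A ℂ}
    (h : ∀ X, krausMap N X = X) (s : ι) (X : Matrix A A ℂ) : Commute (N s) X := by
  classical
  have h_sum : ∑ s, (N s * X - X * N s) * (N s * X - X * N s)ᴴ = 0 := calc
    _ = krausMap N (X * Xᴴ) - X * krausMap N Xᴴ - (krausMap N X * Xᴴ - X * krausMap N 1 * Xᴴ) := by
      simp [krausMap, sub_mul, mul_sub, Finset.mul_sum, Finset.sum_mul, Matrix.mul_assoc]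
    _ = 0 := by simp [h]
  have h_zero := (Finset.sum_eq_zero_iff_of_nonneg fun t _ =>
    (posSemidef_self_mul_conjTranspose (N t * X - X * N t)).nonneg).mp h_sum s (Finset.mem_univ s)
  exact sub_eq_zero.mp (self_mul_conjTranspose_eq_zero.mp h_zero)

lemma exists_eq_smul_one_of_krausMap_eq_self [DecidableEq A] {N : ι → Matrix A A ℂ}
    (h : ∀ X, krausMap N X = X) : ∃ c : ι → ℂ, ∀ s, N s = c s • (1 : Matrix A A ℂ) := by
  have h_scalar (s : ι) : ∃ z : ℂ, scalar A z = N s :=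
    mem_range_scalar_of_commute_single fun i j _ => (commute_of_krausMap_eq_self h s _).symm
  choose c hc using h_scalar
  exact ⟨c, fun s => by rw [← hc, smul_one_eq_diagonal, scalar_apply]⟩

end Kraus

section Choi

variable {A B : Type*}

lemma IsCPMap.posSemidef_idTensor [Fintype A] [Fintype B] {Φ : Matrix A A ℂ →ₗ[ℂ] Matrix B B ℂ}
    (hΦ : IsCPMap Φ) {n : Type*} [Finite n] {M : Matrix (n × A) (n × A) ℂ} (hM : M.PosSemidef) :
    (idTensor n Φ M).PosSemidef := by
  let e := Finite.equivFin n
  have h_reindex : idTensor n Φ M =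
      (idTensor _ Φ (M.submatrix (Prod.map e.symm id) (Prod.map e.symm id))).submatrix
        (Prod.map e id) (Prod.map e id) := by
    ext x y
    simp [idTensor]
  rw [h_reindex]
  exact (hΦ _ _ (hM.submatrix _)).submatrix _

section ChoiMatrix

variable [DecidableEq A]

/-- The Choi matrix `∑ a a', |a⟩⟨a'| ⊗ Φ(|a⟩⟨a'|)`, with the input factor on the left. -/
def choiMatrix (Φ : Matrix A A ℂ →ₗ[ℂ] Matrix B B ℂ) : Matrix (A × B) (A × B) ℂ :=
  Matrix.of fun x y => Φ (single x.1 y.1 1) x.2 y.2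

variable [Fintype A]

lemma apply_eq_sum_mul_choiMatrix (Φ : Matrix A A ℂ →ₗ[ℂ] Matrix B B ℂ) (X : Matrix A A ℂ)
    (b b' : B) : Φ X b b' = ∑ a, ∑ a', X a a' * choiMatrix Φ (a, b) (a', b') := by
  have h_single (a a' : A) : single a a' (X a a') = X a a' • single a a' (1 : ℂ) := by
    simp [smul_single]
  conv_lhs => rw [matrix_eq_sum_single X]
  simp only [h_single, map_sum, map_smul, Matrix.sum_apply, Matrix.smul_apply, smul_eq_mul,
    choiMatrix, Matrix.of_apply]

variable [Fintype B]

lemma IsCPMap.posSemidef_choiMatrix {Φ : Matrix A A ℂ →ₗ[ℂ] Matrix B B ℂ} (hΦ : IsCPMap Φ) :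
    (choiMatrix Φ).PosSemidef := by
  -- the unnormalised maximally entangled vector `∑ a, |a⟩ ⊗ |a⟩`
  let v : A × A → ℂ := fun x => if x.1 = x.2 then 1 else 0
  have h_choi : choiMatrix Φ = idTensor A Φ (vecMulVec v (star v)) := by
    ext x y
    have h_block : (Matrix.of fun a b => vecMulVec v (star v) (x.1, a) (y.1, b)) =
        single x.1 y.1 (1 : ℂ) := by
      ext a b
      simp [v, vecMulVec_apply, single_apply, ← ite_and, and_comm]
    rw [idTensor, Matrix.of_apply, h_block]
    rfl
  rw [h_choi]
  exact hΦ.posSemidef_idTensor (posSemidef_vecMulVec_self_star v)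

end ChoiMatrix

open scoped MatrixOrder in
lemma IsCPMap.exists_eq_krausMap [Fintype A] [Fintype B] {Φ : Matrix A A ℂ →ₗ[ℂ] Matrix B B ℂ}
    (hΦ : IsCPMap Φ) : ∃ K : A × B → Matrix B A ℂ, ∀ X, Φ X = krausMap K X := by
  classical
  obtain ⟨S, hS⟩ := CStarAlgebra.nonneg_iff_eq_star_mul_self.mp hΦ.posSemidef_choiMatrix.nonneg
  refine ⟨fun s => Matrix.of fun b a => star (S s (a, b)), fun X => ?_⟩
  ext b b'
  calc Φ X b b'
      = ∑ a, ∑ a', ∑ s, X a a' * (star (S s (a, b)) * S s (a', b')) := by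
        simp [apply_eq_sum_mul_choiMatrix, hS, Matrix.mul_apply, Finset.mul_sum]
    _ = ∑ s, ∑ a', ∑ a, X a a' * (star (S s (a, b)) * S s (a', b')) := by
        rw [Finset.sum_comm_cycle]
        exact Finset.sum_congr rfl fun _ _ => Finset.sum_comm
    _ = krausMap _ X b b' := by
        simp [krausMap, Matrix.sum_apply, Matrix.mul_apply, Finset.mul_sum, mul_comm,
          mul_left_comm]

end Choi

section KnillLaflamme

variable {R A B ι : Type*} [DecidableEq A] [Fintype B]

/-- The Knill–Laflamme condition for error operators `K` on the full input space, with coefficient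
matrix `C`. -/
def IsKnillLaflamme (K : ι → Matrix B A ℂ) (C : Matrix ι ι ℂ) : Prop :=
  ∀ e f, (K e)ᴴ * K f = C e f • (1 : Matrix A A ℂ)

lemma exists_isKnillLaflamme_of_leftInverse [Fintype A] [Fintype ι]
    {K : ι → Matrix B A ℂ} {Φ : Matrix B B ℂ →ₗ[ℂ] Matrix A A ℂ} (hΦ : IsCPTP Φ)
    (hInv : Function.LeftInverse Φ (krausMap K)) :
    ∃ C : Matrix ι ι ℂ, C.PosSemidef ∧ IsKnillLaflamme K C := by
  classical
  obtain ⟨L, hL⟩ := hΦ.1.exists_eq_krausMap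
  have hL_one : ∑ s, (L s)ᴴ * L s = 1 :=
    sum_conjTranspose_mul_self_eq_one_of_trace_krausMap fun X => by rw [← hL, hΦ.2]
  obtain ⟨c, hc⟩ := exists_eq_smul_one_of_krausMap_eq_self
    (N := fun p : (B × A) × ι => L p.1 * K p.2) fun X => by
      rw [← krausMap_krausMap, ← hL, hInv]
  let c' : Matrix (B × A) ι ℂ := Matrix.of fun s e => c (s, e)
  refine ⟨c'ᴴ * c', posSemidef_conjTranspose_mul_self c', fun e f => ?_⟩
  calc (K e)ᴴ * K f
      = (K e)ᴴ * (∑ s, (L s)ᴴ * L s) * K f := by rw [hL_one, Matrix.mul_one]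
    _ = ∑ s, (L s * K e)ᴴ * (L s * K f) := by
        simp [Matrix.mul_sum, Matrix.sum_mul, Matrix.mul_assoc]
    _ = (c'ᴴ * c') e f • 1 := by
        simp [fun s e => hc (s, e), c', Matrix.mul_apply, Finset.sum_smul, smul_smul, mul_comm]

namespace IsKnillLaflamme

variable {K : ι → Matrix B A ℂ} {C : Matrix ι ι ℂ}

lemma one_kronecker [Fintype R] [DecidableEq R] (h : IsKnillLaflamme K C) :
    IsKnillLaflamme (fun e => (1 : Matrix R R ℂ) ⊗ₖ K e) C := fun e f => by
  rw [conjTranspose_kronecker, ← mul_kronecker_mul, h, conjTranspose_one, Matrix.one_mul,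
    kronecker_smul, one_kronecker_one]

variable [Fintype ι]

lemma trace_eq_one [Nonempty A] (h : IsKnillLaflamme K C) (hK : ∑ e, (K e)ᴴ * K e = 1) :
    C.trace = 1 := by
  obtain ⟨a⟩ := ‹Nonempty A›
  simpa [h _ _, Matrix.sum_apply, Matrix.trace] using congrFun₂ hK a a

lemma vnEntropy_krausMap [Fintype A] [DecidableEq B] [DecidableEq ι]
    (h : IsKnillLaflamme K C)
    (hC : C.IsHermitian) {σ : Matrix A A ℂ} (hσ : σ.IsHermitian) :
    vnEntropy (krausMap K σ) = vnEntropy (σ ⊗ₖ C) := by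
  let V : Matrix B (A × ι) ℂ := Matrix.of fun b x => K x.2 b x.1
  have h_gram : Vᴴ * V = (1 : Matrix A A ℂ) ⊗ₖ C := by
    ext ⟨a, e⟩ ⟨a', f⟩
    simpa [V, Matrix.mul_apply, mul_comm] using congrFun₂ (h e f) a a'
  have h_conj : krausMap K σ = V * (σ ⊗ₖ (1 : Matrix ι ι ℂ)) * Vᴴ := by
    ext x y
    simp [V, krausMap, Matrix.sum_apply, Matrix.mul_apply, Fintype.sum_prod_type_right,
      Matrix.one_apply]
  have h_swap : Vᴴ * (V * (σ ⊗ₖ (1 : Matrix ι ι ℂ))) = σ ⊗ₖ C := by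
    rw [← Matrix.mul_assoc, h_gram, ← mul_kronecker_mul, Matrix.one_mul, Matrix.mul_one]
  rw [h_conj, vnEntropy_mul_comm
    (isHermitian_mul_mul_conjTranspose _ (isHermitian_kronecker hσ isHermitian_one))
    (by rw [h_swap]; exact isHermitian_kronecker hσ hC), h_swap]

end IsKnillLaflamme

end KnillLaflamme

section PartialTrace

variable {R A B E : Type*}

/-- The block `⟨e| W` of an operator `W` into `B ⊗ E`; these are the Kraus operators of
`σ ↦ Tr_E[W σ W†]`. -/
def envBlock (W : Matrix (B × E) A ℂ) (e : E) : Matrix B A ℂ :=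
  Matrix.of fun b a => W (b, e) a

lemma sum_conjTranspose_envBlock_mul_self [Fintype B] [Fintype E] (W : Matrix (B × E) A ℂ) :
    ∑ e, (envBlock W e)ᴴ * envBlock W e = Wᴴ * W := by
  ext x y
  simp [envBlock, Matrix.mul_apply, Matrix.sum_apply, Fintype.sum_prod_type_right]

lemma ptraceRight_conj_eq_krausMap [Fintype A] [Fintype E] (W : Matrix (B × E) A ℂ)
    (σ : Matrix A A ℂ) : ptraceRight (W * σ * Wᴴ) = krausMap (envBlock W) σ := by
  ext x y
  simp [ptraceRight, krausMap, envBlock, Matrix.mul_apply, Matrix.sum_apply]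

lemma ptrace3E_one_kronecker_conj [Fintype R] [DecidableEq R] [Fintype A] [Fintype E]
    (W : Matrix (B × E) A ℂ) (ω : Matrix (R × A) (R × A) ℂ) :
    ptrace3E (((1 : Matrix R R ℂ) ⊗ₖ W) * ω * ((1 : Matrix R R ℂ) ⊗ₖ W)ᴴ) =
      krausMap (fun e => (1 : Matrix R R ℂ) ⊗ₖ envBlock W e) ω := by
  ext x y
  simp [ptrace3E, krausMap, envBlock, Matrix.mul_apply, Matrix.sum_apply]

lemma ptraceLeft_one_kronecker_conj [Fintype R] [DecidableEq R] [Fintype A]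
    (W : Matrix B A ℂ) (ω : Matrix (R × A) (R × A) ℂ) :
    ptraceLeft (((1 : Matrix R R ℂ) ⊗ₖ W) * ω * ((1 : Matrix R R ℂ) ⊗ₖ W)ᴴ) =
      W * ptraceLeft ω * Wᴴ := by
  have h_block (r : R) (x y : B) :
      (((1 : Matrix R R ℂ) ⊗ₖ W) * ω * ((1 : Matrix R R ℂ) ⊗ₖ W)ᴴ) (r, x) (r, y) =
        (W * (Matrix.of fun a a' => ω (r, a) (r, a')) * Wᴴ) x y := by
    simp [Matrix.mul_apply, Fintype.sum_prod_type, Matrix.one_apply, apply_ite]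
  have h_sum : ptraceLeft ω = ∑ r, Matrix.of fun a a' => ω (r, a) (r, a') := by
    ext x y
    simp [ptraceLeft, Matrix.sum_apply]
  ext x y
  simp only [h_sum, Matrix.mul_sum, Matrix.sum_mul, Matrix.sum_apply, ← h_block]
  rfl

lemma ptraceLeft_ptrace3E [Fintype R] [Fintype E] (M : Matrix (R × B × E) (R × B × E) ℂ) :
    ptraceLeft (ptrace3E M) = ptraceRight (ptraceLeft M) := by
  ext x y
  simp only [ptraceLeft, ptrace3E, ptraceRight, Matrix.of_apply]
  exact Finset.sum_comm

lemma isHermitian_ptraceLeft [Fintype R] {ω : Matrix (R × A) (R × A) ℂ} (hω : ω.IsHermitian) :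
    (ptraceLeft ω).IsHermitian := by
  ext x y
  simp [ptraceLeft, hω.apply]

lemma trace_ptraceLeft [Fintype R] [Fintype A] (ω : Matrix (R × A) (R × A) ℂ) :
    (ptraceLeft ω).trace = ω.trace := by
  simp only [Matrix.trace, ptraceLeft, Matrix.diag_apply, Matrix.of_apply,
    Fintype.sum_prod_type_right]

end PartialTrace

section Markov

variable {R A B E : Type*} [Fintype R] [DecidableEq R] [Fintype A] [Fintype B] [Fintype E]

lemma IsCPTP.isometry_of_leftInverse [DecidableEq A] {W : Matrix (B × E) A ℂ}
    {Φ : Matrix B B ℂ →ₗ[ℂ] Matrix A A ℂ} (hΦ : IsCPTP Φ)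
    (hInv : Function.LeftInverse Φ (krausMap (envBlock W))) : Wᴴ * W = 1 := by
  rw [← sum_conjTranspose_envBlock_mul_self]
  exact sum_conjTranspose_mul_self_eq_one_of_trace_krausMap fun X => by rw [← hΦ.2, hInv]

variable [DecidableEq B] [DecidableEq E]

lemma condMutualInfo_eq_zero_of_isKnillLaflamme [DecidableEq A] {W : Matrix (B × E) A ℂ}
    (hW : Wᴴ * W = 1) {C : Matrix E E ℂ} (hC : C.IsHermitian) (hKL : IsKnillLaflamme (envBlock W) C)
    {ω : Matrix (R × A) (R × A) ℂ} (hω : ω.IsHermitian) :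
    condMutualInfo (((1 : Matrix R R ℂ) ⊗ₖ W) * ω * ((1 : Matrix R R ℂ) ⊗ₖ W)ᴴ) = 0 := by
  have hσ : (ptraceLeft ω).IsHermitian := isHermitian_ptraceLeft hω
  have hRW : ((1 : Matrix R R ℂ) ⊗ₖ W)ᴴ * ((1 : Matrix R R ℂ) ⊗ₖ W) = 1 :=
    kronecker_isometry (by simp) hW
  rw [condMutualInfo, ptraceLeft_ptrace3E, ptraceLeft_one_kronecker_conj,
    ptrace3E_one_kronecker_conj, ptraceRight_conj_eq_krausMap,
    hKL.one_kronecker.vnEntropy_krausMap hC hω, hKL.vnEntropy_krausMap hC hσ,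
    vnEntropy_isometry_conj hRW hω, vnEntropy_isometry_conj hW hσ]
  cases isEmpty_or_nonempty A
  · simp [vnEntropy_of_isEmpty]
  · have hC_trace : C.trace = 1 :=
      hKL.trace_eq_one <| (sum_conjTranspose_envBlock_mul_self W).trans hW
    rw [vnEntropy_kronecker hω hC, vnEntropy_kronecker hσ hC, trace_ptraceLeft, hC_trace,
      Complex.one_re]
    ring

theorem stmt15_general (W : Matrix (B × E) A ℂ) (Φ : Matrix B B ℂ →ₗ[ℂ] Matrix A A ℂ)
    (hΦ : IsCPTP Φ) (hInv : ∀ σ, Φ (ptraceRight (W * σ * Wᴴ)) = σ)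
    (ω : Matrix (R × A) (R × A) ℂ) (hω : ω.PosSemidef) :
    condMutualInfo (((1 : Matrix R R ℂ) ⊗ₖ W) * ω * ((1 : Matrix R R ℂ) ⊗ₖ W)ᴴ) = 0 := by
  classical
  have hInv' : Function.LeftInverse Φ (krausMap (envBlock W)) := fun σ => by
    rw [← ptraceRight_conj_eq_krausMap, hInv]
  obtain ⟨C, hC, hKL⟩ := exists_isKnillLaflamme_of_leftInverse hΦ hInv'
  exact condMutualInfo_eq_zero_of_isKnillLaflamme (hΦ.isometry_of_leftInverse hInv')
    hC.isHermitian hKL hω.isHermitian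

end Markov

/-- If `W : Q₀ → Q ⊗ E` is an isometry whose induced channel
`𝒲(σ) = Tr_E[W σ W†]` is invertible by a CPTP map, then for every reference `R` and
every state `ω_{RQ₀}`, the state `(1_R ⊗ W) ω (1_R ⊗ W)†` is a Markov state. -/
theorem stmt15 {Q0 Q E : Type} [Fintype Q0] [DecidableEq Q0] [Fintype Q] [DecidableEq Q]
    [Fintype E] [DecidableEq E]
    (W : Matrix (Q × E) Q0 ℂ) (hW : Wᴴ * W = 1)
    (W' : Matrix Q Q ℂ →ₗ[ℂ] Matrix Q0 Q0 ℂ) (hW' : IsCPTP W')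
    (hInv : ∀ σ : Matrix Q0 Q0 ℂ, W' (ptraceRight (W * σ * Wᴴ)) = σ) :
    ∀ (R : Type) [Fintype R] [DecidableEq R] (ω : Matrix (R × Q0) (R × Q0) ℂ),
      IsState ω →
      condMutualInfo (((1 : Matrix R R ℂ) ⊗ₖ W) * ω * ((1 : Matrix R R ℂ) ⊗ₖ W)ᴴ) = 0 :=
  fun _ _ _ ω hω => stmt15_general W W' hW' hInv ω hω.1
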